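/- arXiv:1408.5683 — 8 statements merged into one kernel-verified Lean document; each statement's English description precedes it below -/
import Mathlib

section
/- Let A be a unital C*-algebra and let u, v ∈ A be star-normal elements (u·u* = u*·u and v·v* = v*·v). If u·v = 0, then u*·v = 0, v·u* = 0, v*·u = 0, u·v* = 0, and v·u = 0. -/
/-- If `u` and `v` are star-normal elements of a unital C*-algebra with `u * v = 0`,
then all related products vanish. -/
theorem stmt_0 {A : Type*} [NormedRing A] [StarRing A] [CStarRing A]
    [CompleteSpace A] [NormedAlgebra ℂ A] [StarModule ℂ A]
    (u v : A) (hu : u * star u = star u * u) (hv : v * star v = star v * v)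
    (h : u * v = 0) :
    star u * v = 0 ∧ v * star u = 0 ∧ star v * u = 0 ∧ u * star v = 0 ∧ v * u = 0 := by
  have h1 : star u * v = 0 := by
    rw [← CStarRing.star_mul_self_eq_zero_iff]
    calc star (star u * v) * (star u * v) = star v * (u * star u) * v := by
          simp [mul_assoc]
      _ = star v * star u * (u * v) := by rw [hu]; simp [mul_assoc]
      _ = 0 := by rw [h, mul_zero]
  have h3 : star v * u = 0 := by
    simpa using congrArg star h1
  have h4 : u * star v = 0 := by
    rw [← CStarRing.mul_star_self_eq_zero_iff]
    calc u * star v * star (u * star v) = u * (star v * v) * star u := by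
          simp [mul_assoc]
      _ = (u * v) * (star v * star u) := by rw [← hv]; simp [mul_assoc]
      _ = 0 := by rw [h, zero_mul]
  have h2 : v * star u = 0 := by
    simpa using congrArg star h4
  have h5 : v * u = 0 := by
    rw [← CStarRing.star_mul_self_eq_zero_iff]
    calc star (v * u) * (v * u) = star u * (star v * v) * u := by
          simp [mul_assoc]
      _ = star u * v * (star v * u) := by rw [← hv]; simp [mul_assoc]
      _ = 0 := by rw [h3, mul_zero]
  exact ⟨h1, h2, h3, h4, h5⟩
end

section
/- Let n ≥ 5 be an integer coprime to 6, and let W be the Coxeter group of the Coxeter matrix M on the index set {0,1,2} with M(i,i) = 1, M(0,1) = M(1,0) = 3, M(0,2) = M(2,0) = 2, M(1,2) = M(2,1) = n, with simple reflections a = s₀, b = s₁, c = s₂. Then in W the element b·c·b is distinct from each of the four elements a·b·a, a·b·c, c·b·a, and c·b·c. -/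
/-- `(b c)^k = diag(η^k, ζ^k, 1)` for the diagonal matrix `b c`. -/
theorem aux_diag_pow (x y : ℂ) (k : ℕ) (hx : x ^ k = 1) (hy : y ^ k = 1) :
    (!![x, 0, 0; 0, y, 0; 0, 0, 1] : Matrix (Fin 3) (Fin 3) ℂ) ^ k = 1 := by
  have h : (!![x, 0, 0; 0, y, 0; 0, 0, 1] : Matrix (Fin 3) (Fin 3) ℂ)
      = Matrix.diagonal ![x, y, 1] := by
    ext i j; fin_cases i <;> fin_cases j <;> simp
  rw [h, Matrix.diagonal_pow, ← Matrix.diagonal_one]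
  congr 1
  ext i; fin_cases i <;> simp [hx, hy]

/-- In a (2,3,n) Coxeter group with `n ≥ 2`, `b ≠ c`. -/
theorem aux_ne (n : ℕ) (hn : 2 ≤ n) (M : CoxeterMatrix (Fin 3))
    (h01 : M 0 1 = 3) (h02 : M 0 2 = 2) (h12 : M 1 2 = n) :
    (M.simple 1 : M.Group) ≠ M.simple 2 := by
  obtain ⟨z, hz⟩ : ∃ z : ℂ, IsPrimitiveRoot z n :=
    ⟨_, Complex.isPrimitiveRoot_exp n (by omega)⟩
  have hz1 : z ≠ 1 := hz.ne_one (by omega)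
  have hzn : z ^ n = 1 := hz.pow_eq_one
  have hz0 : z ≠ 0 := hz.ne_zero (by omega)
  obtain ⟨y, hy⟩ : ∃ y, y = z⁻¹ := ⟨_, rfl⟩
  have hzy : z * y = 1 := by rw [hy]; exact mul_inv_cancel₀ hz0
  have hyn : y ^ n = 1 := by rw [hy, inv_pow, hzn, inv_one]
  have hd : 2 - z - y ≠ 0 := by
    intro h
    have : (z - 1) ^ 2 = 0 := by linear_combination (-z) * h - hzy
    exact hz1 (sub_eq_zero.mp (pow_eq_zero_iff (two_ne_zero) |>.mp this))
  obtain ⟨t, ht⟩ : ∃ t, t * (2 - z - y) = 1 := ⟨_, inv_mul_cancel₀ hd⟩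
  let A : Matrix (Fin 3) (Fin 3) ℂ :=
    !![1 - t, -t, -(2 - 2 * t); -t, 1 - t, -(2 - 2 * t); -t, -t, 1 - (2 - 2 * t)]
  let B : Matrix (Fin 3) (Fin 3) ℂ := !![0, y, 0; z, 0, 0; 0, 0, 1]
  let C : Matrix (Fin 3) (Fin 3) ℂ := !![0, 1, 0; 1, 0, 0; 0, 0, 1]
  have hAA : A * A = 1 := by
    ext i j; fin_cases i <;> fin_cases j <;> simp [A, Matrix.mul_apply, Fin.sum_univ_three] <;> ring
  have hBB : B * B = 1 := by
    ext i j; fin_cases i <;> fin_cases j <;>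
      simp [B, Matrix.mul_apply, Fin.sum_univ_three] <;> linear_combination hzy
  have hCC : C * C = 1 := by
    ext i j; fin_cases i <;> fin_cases j <;> simp [C, Matrix.mul_apply, Fin.sum_univ_three]
  have hAC : A * C = C * A := by
    ext i j; fin_cases i <;> fin_cases j <;> simp [A, C, Matrix.mul_apply, Fin.sum_univ_three]
  have hABA : A * B * A = B * A * B := by
    ext i j; fin_cases i <;> fin_cases j <;>
      simp [A, B, Matrix.mul_apply, Fin.sum_univ_three] <;> grind
  have hBC : B * C = !![y, 0, 0; 0, z, 0; 0, 0, 1] := by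
    ext i j; fin_cases i <;> fin_cases j <;> simp [B, C, Matrix.mul_apply, Fin.sum_univ_three]
  have hCB : C * B = !![z, 0, 0; 0, y, 0; 0, 0, 1] := by
    ext i j; fin_cases i <;> fin_cases j <;> simp [B, C, Matrix.mul_apply, Fin.sum_univ_three]
  have pBC : (B * C) ^ n = 1 := by rw [hBC]; exact aux_diag_pow _ _ _ hyn hzn
  have pCB : (C * B) ^ n = 1 := by rw [hCB]; exact aux_diag_pow _ _ _ hzn hyn
  have pAC : (A * C) ^ 2 = 1 := by
    rw [pow_two]; nth_rewrite 1 [hAC]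
    rw [mul_assoc, ← mul_assoc A, hAA, one_mul, hCC]
  have pCA : (C * A) ^ 2 = 1 := by rw [← hAC]; exact pAC
  have pAB : (A * B) ^ 3 = 1 := by
    have : (A * B) ^ 3 = (A * B * A) * (B * A * B) := by noncomm_ring
    rw [this, ← hABA]
    have : A * B * A * (A * B * A) = A * B * (A * A) * B * A := by noncomm_ring
    rw [this, hAA, mul_one, mul_assoc A, hBB, mul_one, hAA]
  have pBA : (B * A) ^ 3 = 1 := by
    have : (B * A) ^ 3 = (B * A * B) * (A * B * A) := by noncomm_ring
    rw [this, ← hABA]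
    have : A * B * A * (A * B * A) = A * B * (A * A) * B * A := by noncomm_ring
    rw [this, hAA, mul_one, mul_assoc A, hBB, mul_one, hAA]
  have h10 : M 1 0 = 3 := by rw [M.symmetric]; exact h01
  have h20 : M 2 0 = 2 := by rw [M.symmetric]; exact h02
  have h21 : M 2 1 = n := by rw [M.symmetric]; exact h12
  have hL : M.IsLiftable ![A, B, C] := by
    intro i j
    fin_cases i <;> fin_cases j
    · simpa using hAA
    · simpa [h01] using pAB
    · simpa [h02] using pAC
    · simpa [h10] using pBA
    · simpa using hBB
    · simpa [h12] using pBC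
    · simpa [h20] using pCA
    · simpa [h21] using pCB
    · simpa using hCC
  intro h
  have e1 := M.toCoxeterSystem.lift_apply_simple hL 1
  have e2 := M.toCoxeterSystem.lift_apply_simple hL 2
  have h' : M.toCoxeterSystem.simple 1 = M.toCoxeterSystem.simple 2 := h
  rw [h', e2] at e1
  have := congrFun (congrFun e1 1) 0
  simp [B, C] at this
  exact hz1 this.symm

/-- In the Coxeter group with parameters `(2,3,n)`, `n ≥ 5` coprime to `6`,
the element `b*c*b` differs from `a*b*a`, `a*b*c`, `c*b*a` and `c*b*c`. -/
theorem stmt_2 (n : ℕ) (hn : 5 ≤ n) (hcop : Nat.Coprime n 6)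
    (M : CoxeterMatrix (Fin 3))
    (h01 : M 0 1 = 3) (h02 : M 0 2 = 2) (h12 : M 1 2 = n) :
    let a : M.Group := M.simple 0
    let b : M.Group := M.simple 1
    let c : M.Group := M.simple 2
    b * c * b ≠ a * b * a ∧ b * c * b ≠ a * b * c ∧
    b * c * b ≠ c * b * a ∧ b * c * b ≠ c * b * c := by
  intro a b c
  have hne : b ≠ c := aux_ne n (by omega) M h01 h02 h12
  have haa : a * a = 1 := M.toCoxeterSystem.simple_mul_simple_self 0
  have hbb : b * b = 1 := M.toCoxeterSystem.simple_mul_simple_self 1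
  have hcc : c * c = 1 := M.toCoxeterSystem.simple_mul_simple_self 2
  have hab : (a * b) ^ 3 = 1 := by
    have h := M.toCoxeterSystem.simple_mul_simple_pow 0 1
    rw [h01] at h
    exact h
  have hbc : (b * c) ^ n = 1 := by
    rw [← h12]; exact M.toCoxeterSystem.simple_mul_simple_pow 1 2
  have ia : a⁻¹ = a := inv_eq_of_mul_eq_one_left haa
  have ib : b⁻¹ = b := inv_eq_of_mul_eq_one_left hbb
  have ic : c⁻¹ = c := inv_eq_of_mul_eq_one_left hcc
  have key : (b * c) ^ 6 ≠ 1 := by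
    intro h6
    have h1 : orderOf (b * c) ∣ Nat.gcd n 6 :=
      Nat.dvd_gcd (orderOf_dvd_of_pow_eq_one hbc) (orderOf_dvd_of_pow_eq_one h6)
    rw [hcop, Nat.dvd_one, orderOf_eq_one_iff] at h1
    exact hne (by rw [← ic]; exact eq_inv_of_mul_eq_one_left h1)
  have k2 : b * c * b ≠ a * b * c := by
    intro h
    apply key
    have : (b * c) ^ 2 = a * b := by
      rw [pow_two, ← mul_assoc, h, mul_assoc, hcc, mul_one]
    rw [show 6 = 2 * 3 from rfl, pow_mul, this, hab]
  refine ⟨?_, k2, ?_, ?_⟩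
  · intro h
    have h3 : a * b * a = b * a * b := by
      have : (a * b * a) * (b * a * b) = 1 := by rw [← hab]; simp only [pow_succ, pow_zero, one_mul, mul_assoc]
      rw [eq_inv_of_mul_eq_one_left this]
      simp only [mul_inv_rev, ia, ib, mul_assoc]
    rw [h3] at h
    have hca : c = a := mul_left_cancel (mul_right_cancel h)
    apply key
    have : b * c = (a * b)⁻¹ := by rw [mul_inv_rev, ia, ib, hca]
    rw [this, inv_pow, show 6 = 3 * 2 from rfl, pow_mul, hab, one_pow, inv_one]
  · intro h
    apply k2
    have := congrArg (·⁻¹) h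
    simpa only [mul_inv_rev, ia, ib, ic, mul_assoc] using this
  · intro h
    apply key
    have : (b * c) ^ 3 = 1 := by
      have e : (b * c) ^ 3 = (b * c * b) * (c * b * c) := by
        simp only [pow_succ, pow_zero, one_mul, mul_assoc]
      rw [e, ← h]
      nth_rewrite 2 [h]
      rw [h]
      have i : (c * b * c)⁻¹ = c * b * c := by simp only [mul_inv_rev, ib, ic, mul_assoc]
      nth_rewrite 1 [← i]
      exact inv_mul_cancel _
    rw [show 6 = 3 * 2 from rfl, pow_mul, this, one_pow]
end

section
/- Let l ≥ 2 and let 3 ≤ n₁ < n₂ < ⋯ < n_l be integers. Let Γ = C_{n₁} ∗ C_{n₂} ∗ ⋯ ∗ C_{n_l} be the free product of the cyclic groups C_{n_i} = ⟨a_i | a_i^{n_i} = 1⟩, with each a_i viewed as an element of Γ via the canonical embedding. Then for every non-cancelling sequence (g₁, …, g_{n₁−1}) of letters of length n₁ − 1 and every index d with 2 ≤ d ≤ l, the product g₁·g₂·⋯·g_{n₁−1} is not equal to a_d and not equal to a_d⁻¹. -/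
/-- The canonical generator of the `i`-th factor of the free product of cyclic groups
`C_{n 0} ∗ ⋯ ∗ C_{n (l-1)}` (the letter `aᵢ`). -/
def freeProdCyclicGen {l : ℕ} (n : Fin l → ℕ) (i : Fin l) :
    Monoid.CoprodI (fun i : Fin l => Multiplicative (ZMod (n i))) :=
  Monoid.CoprodI.of (M := fun i : Fin l => Multiplicative (ZMod (n i)))
    (Multiplicative.ofAdd (1 : ZMod (n i)))

open Monoid.CoprodI in
theorem fpc_nz {m : ℕ} {r : ℕ} {e : ℤ} (he : e = 1 ∨ e = -1) (h1 : 1 ≤ r) (h2 : r < m) :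
    (Multiplicative.ofAdd ((r * e : ℤ) : ZMod m)) ≠ 1 := by
  intro h
  have h' : ((r * e : ℤ) : ZMod m) = 0 := h
  rw [ZMod.intCast_zmod_eq_zero_iff_dvd] at h'
  have : (m : ℤ) ∣ r := by
    rcases he with rfl | rfl <;> simpa using h'
  have := Int.le_of_dvd (by omega) this
  omega

open Monoid.CoprodI in
theorem fpc_normal {l : ℕ} (n : Fin l → ℕ)
    (L : List (Monoid.CoprodI (fun i : Fin l => Multiplicative (ZMod (n i))))) :
    ∀ (g : Monoid.CoprodI (fun i : Fin l => Multiplicative (ZMod (n i)))) (i : Fin l) (e : ℤ),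
      (e = 1 ∨ e = -1) →
      g = of (M := fun i : Fin l => Multiplicative (ZMod (n i)))
        (Multiplicative.ofAdd ((e : ℤ) : ZMod (n i))) →
      (∀ x ∈ L, ∃ (i : Fin l) (e : ℤ), (e = 1 ∨ e = -1) ∧
        x = of (M := fun i : Fin l => Multiplicative (ZMod (n i)))
          (Multiplicative.ofAdd ((e : ℤ) : ZMod (n i)))) →
      List.IsChain (fun x y => y ≠ x⁻¹) (g :: L) →
      (∀ i, L.length + 1 < n i) →
      ∃ (r : ℕ) (w : Word (fun i : Fin l => Multiplicative (ZMod (n i)))),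
        1 ≤ r ∧ r ≤ L.length + 1 ∧ w.fstIdx ≠ some i ∧
        (g :: L).prod = of (M := fun i : Fin l => Multiplicative (ZMod (n i)))
          (Multiplicative.ofAdd ((r * e : ℤ) : ZMod (n i))) * w.prod ∧
        (r = L.length + 1 ∨ w ≠ Word.empty) := by
  induction L with
  | nil =>
    intro g i e he hg _ _ _
    exact ⟨1, Word.empty, le_rfl, by simp, by simp [Word.fstIdx, Word.empty], by simp [hg], by simp⟩
  | cons g' L ih =>
    intro g i e he hg hL hc hn
    obtain ⟨j, e', he', hg'⟩ := hL g' (by simp)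
    rw [List.isChain_cons_cons] at hc
    obtain ⟨r, w, hr1, hr2, hw, hp, hor⟩ := ih g' j e' he' hg'
      (fun x hx => hL x (by simp [hx])) hc.2
      (fun i => by have := hn i; simp only [List.length_cons] at this; omega)
    by_cases hij : j = i
    · subst hij
      have hee : e' = e := by
        by_contra hne
        apply hc.1
        have : e' = -e := by omega
        rw [hg', hg, this, ← map_inv, ← ofAdd_neg]
        simp
      subst hee
      refine ⟨r + 1, w, by omega, by simp only [List.length_cons]; omega, hw, ?_, ?_⟩
      · rw [List.prod_cons, hp, hg, ← mul_assoc, ← map_mul, ← ofAdd_add]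
        congr 4
        push_cast
        ring
      · simpa using hor
    · have hnz := fpc_nz (m := n j) he' hr1
        (by have := hn j; simp only [List.length_cons] at this; omega)
      refine ⟨1, Word.cons _ w hw hnz, le_rfl, by simp, ?_, ?_, Or.inr ?_⟩
      · rw [Word.fstIdx_cons]; simpa using hij
      · rw [List.prod_cons, hp, hg, Word.prod_cons]
        simp
      · intro h
        have := congrArg Word.toList h
        simp [Word.cons, Word.empty] at this

open Monoid.CoprodI in
theorem fpc_main {l : ℕ} (n : Fin l → ℕ) (k : ℕ) (hk : 2 ≤ k) (hn : ∀ i, k < n i)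
    (L : List (Monoid.CoprodI (fun i : Fin l => Multiplicative (ZMod (n i))))) (hlen : L.length = k)
    (hL : ∀ x ∈ L, ∃ (i : Fin l) (e : ℤ), (e = 1 ∨ e = -1) ∧
        x = of (M := fun i : Fin l => Multiplicative (ZMod (n i)))
          (Multiplicative.ofAdd ((e : ℤ) : ZMod (n i))))
    (hc : List.IsChain (fun x y => y ≠ x⁻¹) L)
    (d : Fin l) (hd : k + 1 < n d) (f : ℤ) (hf : f = 1 ∨ f = -1) :
    L.prod ≠ of (M := fun i : Fin l => Multiplicative (ZMod (n i)))
          (Multiplicative.ofAdd ((f : ℤ) : ZMod (n d))) := by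
  classical
  cases L with
  | nil => simp at hlen; omega
  | cons g L =>
    simp only [List.length_cons] at hlen
    obtain ⟨i, e, he, hg⟩ := hL g (by simp)
    obtain ⟨r, w, hr1, hr2, hw, hp, hor⟩ := fpc_normal n L g i e he hg
      (fun x hx => hL x (by simp [hx])) hc (fun i => by have := hn i; omega)
    intro heq
    rw [hp] at heq
    have hnz := fpc_nz (m := n i) he hr1 (by have := hn i; omega)
    have hnf := fpc_nz (m := n d) (r := 1) hf le_rfl (by omega)
    rw [Nat.cast_one, one_mul] at hnf
    have hemp : (Word.empty (M := fun i : Fin l => Multiplicative (ZMod (n i)))).fstIdx ≠ some d := by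
      simp [Word.fstIdx, Word.empty]
    have hwe : Word.cons _ w hw hnz =
        Word.cons _ (Word.empty (M := fun i : Fin l => Multiplicative (ZMod (n i))))
          hemp hnf := by
      apply Word.equiv.symm.injective
      change Word.prod _ = Word.prod _
      refine (Word.prod_cons _ _ _ _ _).trans (Eq.trans ?_ (Word.prod_cons _ _ _ _ _).symm)
      rw [heq]
      simp
    have hl := congrArg Word.toList hwe
    simp only [Word.cons, Word.empty, List.cons.injEq, Sigma.mk.injEq] at hl
    obtain ⟨⟨rfl, h2⟩, h3⟩ := hl
    have hwemp : w = Word.empty := Word.ext h3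
    have hr : r = k := by
      rcases hor with h | h
      · omega
      · exact absurd hwemp h
    have h4 : ((r * e : ℤ) : ZMod (n i)) = (f : ℤ) := eq_of_heq h2
    rw [ZMod.intCast_eq_intCast_iff_dvd_sub] at h4
    have h5 : (f - r * e).natAbs ≠ 0 ∧ (f - r * e).natAbs < n i := by
      rcases he with rfl | rfl <;> rcases hf with rfl | rfl <;> omega
    have h6 := Nat.le_of_dvd (Nat.pos_of_ne_zero h5.1) (Int.natCast_dvd.mp h4)
    omega

/-- In the free product of cyclic groups `C_{n 0} ∗ ⋯ ∗ C_{n (l-1)}` with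
`3 ≤ n 0 < n 1 < ⋯`, no non-cancelling product of `n 0 - 1` letters from the
symmetric generating set equals `a_d` or `a_d⁻¹` for `d ≠ 0`. -/
theorem stmt_7 (l : ℕ) (hl : 2 ≤ l) (n : Fin l → ℕ)
    (h3 : 3 ≤ n ⟨0, by omega⟩) (hmono : StrictMono n)
    (g : Fin (n ⟨0, by omega⟩ - 1) →
      Monoid.CoprodI (fun i : Fin l => Multiplicative (ZMod (n i))))
    (hletter : ∀ j, ∃ i : Fin l,
      g j = freeProdCyclicGen n i ∨ g j = (freeProdCyclicGen n i)⁻¹)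
    (hred : ∀ (j : ℕ) (hj : j + 1 < n ⟨0, by omega⟩ - 1),
      g ⟨j + 1, hj⟩ ≠ (g ⟨j, by omega⟩)⁻¹)
    (d : Fin l) (hd : 0 < (d : ℕ)) :
    (List.ofFn g).prod ≠ freeProdCyclicGen n d ∧
    (List.ofFn g).prod ≠ (freeProdCyclicGen n d)⁻¹ := by
  have key := fun (f : ℤ) hf => fpc_main n (n ⟨0, by omega⟩ - 1) (by omega) (fun i => by
      have : n ⟨0, by omega⟩ ≤ n i := hmono.monotone (Fin.mk_le_of_le_val (Nat.zero_le _))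
      omega) (List.ofFn g) (by simp) (by
        intro x hx
        obtain ⟨j, rfl⟩ := (List.mem_ofFn' _ _).mp hx
        obtain ⟨i, h | h⟩ := hletter j
        · exact ⟨i, 1, Or.inl rfl, by simpa [freeProdCyclicGen] using h⟩
        · refine ⟨i, -1, Or.inr rfl, ?_⟩
          rw [h, freeProdCyclicGen, ← map_inv, ← ofAdd_neg]
          simp) (by
        rw [List.isChain_iff_getElem]
        intro j hj
        simp only [List.getElem_ofFn]
        exact hred j (by simpa using hj)) d (by
        have : n ⟨0, by omega⟩ < n d := hmono (Fin.lt_def.mpr hd)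
        omega) f hf
  constructor
  · simpa [freeProdCyclicGen] using key 1 (Or.inl rfl)
  · have := key (-1) (Or.inr rfl)
    rw [freeProdCyclicGen, ← map_inv, ← ofAdd_neg]
    simpa using this
end

section
/- Let R be a star ring and a ∈ R with (star a)·a·a = a and a·a·(star a) = a. Then a·(star a) = (star a)·a and a·(star a)·a = a (i.e., a is a normal partial isometry). -/
/-- In a star ring, if `star a * a * a = a` and `a * a * star a = a`, then `a` is a
normal partial isometry. -/
theorem stmt_8 {R : Type*} [Ring R] [StarRing R] (a : R)
    (h1 : star a * a * a = a) (h2 : a * a * star a = a) :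
    a * star a = star a * a ∧ a * star a * a = a := by
  have h : a * star a = star a * a := by
    calc a * star a = (star a * a * a) * star a := by rw [h1]
      _ = star a * (a * a * star a) := by simp only [mul_assoc]
      _ = star a * a := by rw [h2]
  exact ⟨h, by rw [h, h1]⟩
end

section
/- Let R be a star ring and a, g ∈ R such that a is normal (a·(star a) = (star a)·a), (star a)·a·a = a, g commutes with a·a and with (star a)·(star a), and a·a·g = a·g·a. Then a·g = g·a. -/
/-- In a star ring, if `a` is normal with `star a * a * a = a`, and `g` commutes with
`a * a` and with `star a * star a`, and `a * a * g = a * g * a`, then `a * g = g * a`. -/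
theorem stmt_10 {R : Type*} [Ring R] [StarRing R] (a g : R)
    (hnorm : a * star a = star a * a)
    (hpi : star a * a * a = a)
    (hg1 : g * (a * a) = a * a * g)
    (hg2 : g * (star a * star a) = star a * star a * g)
    (hmid : a * a * g = a * g * a) :
    a * g = g * a := by
  have hp : star a * star a * (a * a) = star a * a := by
    calc star a * star a * (a * a) = star a * (star a * a * a) := by noncomm_ring
      _ = star a * a := by rw [hpi]
  have hc : g * (star a * a) = star a * a * g := by
    calc g * (star a * a) = g * (star a * star a) * (a * a) := by rw [← hp, mul_assoc g]
      _ = star a * star a * (g * (a * a)) := by rw [hg2, mul_assoc]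
      _ = star a * star a * (a * a) * g := by rw [hg1, ← mul_assoc]
      _ = star a * a * g := by rw [hp]
  calc a * g = star a * a * a * g := by rw [hpi]
    _ = star a * (a * a * g) := by simp only [mul_assoc]
    _ = star a * a * g * a := by rw [hmid]; simp only [mul_assoc]
    _ = g * (star a * a * a) := by rw [← hc]; simp only [mul_assoc]
    _ = g * a := by rw [hpi]
end

section
/- Let R be a star ring and x, y, z ∈ R such that star x = x·(y·z + z·y), x·x + y·z + z·y = 0, z·(star x) = 0, and y·(star x) = 0. Then x = 0. -/
/-- In a star ring, if `star x = x * (y*z + z*y)`, `x*x + y*z + z*y = 0`,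
`z * star x = 0` and `y * star x = 0`, then `x = 0`. -/
theorem stmt_11 {R : Type*} [Ring R] [StarRing R] (x y z : R)
    (h1 : star x = x * (y * z + z * y))
    (h2 : x * x + y * z + z * y = 0)
    (h3 : z * star x = 0)
    (h4 : y * star x = 0) :
    x = 0 := by
  have hs : star x * star x = 0 := by
    calc star x * star x = x * (y * z + z * y) * star x := by rw [← h1]
      _ = x * (y * (z * star x) + z * (y * star x)) := by noncomm_ring
      _ = 0 := by rw [h3, h4]; simp
  have hx : x * x = 0 := by
    rw [← star_mul] at hs
    exact star_eq_zero.mp hs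
  have hyz : y * z + z * y = 0 := by
    rw [hx, zero_add] at h2
    exact h2
  rw [hyz, mul_zero] at h1
  exact star_eq_zero.mp h1
end

section
/- Let R be a star ring, k ≥ 1 a natural number, and a, e ∈ R such that star e = e·e, a·e = ((star e)·a)^k, and e·a = (a·(star e))^k. Then a·(e·(star e)) = (e·(star e))·a. -/
/-- In a star ring, if `star e = e * e`, `a * e = (star e * a)^k` and
`e * a = (a * star e)^k` with `k ≥ 1`, then `a` commutes with `e * star e`. -/
theorem stmt_12 {R : Type*} [Ring R] [StarRing R] (k : ℕ) (hk : 1 ≤ k) (a e : R)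
    (he : star e = e * e)
    (h1 : a * e = (star e * a) ^ k)
    (h2 : e * a = (a * star e) ^ k) :
    a * (e * star e) = (e * star e) * a := by
  have hs : SemiconjBy (star e) (a * star e) (star e * a) := by
    simp [SemiconjBy, mul_assoc]
  have hp : star e * (a * star e) ^ k = (star e * a) ^ k * star e := hs.pow_right k
  rw [← h1, ← h2] at hp
  rw [← mul_assoc, ← hp, he]
  simp only [mul_assoc]
end

section
/- Let R be a unital ring and a, b, c, g, h, k ∈ R such that h·a = b·g, h·c = b·k, h·b + b·h = 0, g·g + h·h + k·k = 1, g·h = 0, k·h = 0, and a·g + b·h + c·k = 0. Then b = 0. -/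
/-- The algebraic core of the paper's Lemma 6.2 on Coxeter groups: the displayed
relations in a unital ring force `b = 0`. -/
theorem stmt_16 {R : Type*} [Ring R] (a b c g h k : R)
    (h1 : h * a = b * g) (h2 : h * c = b * k)
    (h3 : h * b + b * h = 0)
    (h4 : g * g + h * h + k * k = 1)
    (h5 : g * h = 0) (h6 : k * h = 0)
    (h7 : a * g + b * h + c * k = 0) :
    b = 0 := by
  have e : b * h * h = 0 := by
    have : (a * g + b * h + c * k) * h = a * (g * h) + b * h * h + c * (k * h) := by
      noncomm_ring
    rw [h7, h5, h6] at this
    simpa using this.symm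
  calc b = b * (g * g + h * h + k * k) := by rw [h4, mul_one]
    _ = (b * g) * g + b * h * h + (b * k) * k := by noncomm_ring
    _ = (h * a) * g + b * h * h + (h * c) * k := by rw [h1, h2]
    _ = h * (a * g + b * h + c * k) - (h * b + b * h) * h + b * h * h + b * h * h := by
      noncomm_ring
    _ = 0 := by rw [h7, h3, e]; simp
end
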